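/- Let G be a game with probabilistic uncertainty with priority function p_G : L → {0,…,d}, and let H be the partial-observation game constructed from G with priority function p_H((ℓ,ℓ')) = p_H((ℓ,ℓ',σ_I)) = p_G(ℓ), where Player 2 observes the first component. Player 1 has a sure winning strategy from ℓ_0 in G for Parity(p_G) against all (not all-powerful) Player-2 strategies if and only if Player 1 has an observation-based strategy in H that is sure winning for Parity(p_H) from every state (ℓ_0, ℓ) with un(ℓ_0)(ℓ) > 0 against all observation-based Player-2 strategies. -/

import Mathlib

open Finset MeasureTheory
open scoped Classical

/- ### Games with probabilistic uncertainty -/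

/-- A game with probabilistic uncertainty `(L, Σ_I, Σ_O, Δ, un)`. -/
structure PUGame (L Ai Ao : Type) [Fintype L] [Fintype Ai] [Fintype Ao] : Type where
  Δ : L → Ai → Ao → L → ℝ
  Δ_nonneg : ∀ ℓ σi σo ℓ', 0 ≤ Δ ℓ σi σo ℓ'
  Δ_sum_one : ∀ ℓ σi σo, ∑ ℓ', Δ ℓ σi σo ℓ' = 1
  un : L → L → ℝ
  un_nonneg : ∀ ℓ ℓ', 0 ≤ un ℓ ℓ'
  un_sum_one : ∀ ℓ, ∑ ℓ', un ℓ ℓ' = 1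

/-- A finite prefix `ℓ₀ σ₀ᶦ σ₀ᵒ ℓ₁ … ℓₙ`: the initial location together with
the list of steps `(σᶦ, σᵒ, ℓ)` in *reverse* chronological order. -/
abbrev Pref (L Ai Ao : Type) : Type := L × List (Ai × Ao × L)

variable {L Ai Ao S A : Type}

/-- Last location of a prefix. -/
def lastLoc : Pref L Ai Ao → L
  | (ℓ0, []) => ℓ0
  | (_, t :: _) => t.2.2

/-- The sequence of input/output letters of a prefix (reverse chronological order). -/
def acts (ρ : Pref L Ai Ao) : List (Ai × Ao) := ρ.2.map fun t => (t.1, t.2.1)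

/-- The locations occurring in a prefix. -/
def locList (ρ : Pref L Ai Ao) : List L := ρ.1 :: ρ.2.map fun t => t.2.2

/-- Extension `ρ σᶦ σᵒ ℓ` of a prefix. -/
def extendPref (ρ : Pref L Ai Ao) (σi : Ai) (σo : Ao) (ℓ : L) : Pref L Ai Ao :=
  (ρ.1, (σi, σo, ℓ) :: ρ.2)

section Core
variable [Fintype L] [Fintype Ai] [Fintype Ao]

def IsPrefAux (G : PUGame L Ai Ao) (ℓ0 : L) : List (Ai × Ao × L) → Prop
  | [] => True
  | t :: rest => IsPrefAux G ℓ0 rest ∧ 0 < G.Δ (lastLoc (ℓ0, rest)) t.1 t.2.1 t.2.2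

/-- `ρ` is a genuine prefix of a play of `G`: every transition along `ρ` has
positive probability. -/
def IsPref (G : PUGame L Ai Ao) (ρ : Pref L Ai Ao) : Prop := IsPrefAux G ρ.1 ρ.2

/-- The set of action-matching sequences of `ρ`: same length, same input and
output letters, arbitrary locations. -/
noncomputable def ActMt (ρ : Pref L Ai Ao) : Finset (Pref L Ai Ao) :=
  (Finset.univ : Finset (L × (Fin ρ.2.length → L))).image fun p =>
    (p.1, List.ofFn fun i => ((ρ.2.get i).1, (ρ.2.get i).2.1, p.2 i))

/-- `ObsSeq G ρ ρ'`: the probability of observing `ρ'` given that the actual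
prefix is `ρ`.  (Closed form of the inductive definition: the product of the
`un`-probabilities of the observed locations if the actions match, `0`
otherwise.) -/
noncomputable def ObsSeq (G : PUGame L Ai Ao) (ρ ρ' : Pref L Ai Ao) : ℝ :=
  if acts ρ' = acts ρ then (List.zipWith G.un (locList ρ) (locList ρ')).prod else 0

noncomputable def conePrAux (G : PUGame L Ai Ao) (α : Pref L Ai Ao → Ai → ℝ)
    (β : Pref L Ai Ao → Ai → Ao → ℝ) (ℓ0 : L) : List (Ai × Ao × L) → ℝ
  | [] => 1
  | t :: rest =>
      conePrAux G α β ℓ0 rest *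
        ∑ ρ' ∈ ActMt ((ℓ0, rest) : Pref L Ai Ao),
          ObsSeq G (ℓ0, rest) ρ' * α ρ' t.1 * β (ℓ0, rest) t.1 t.2.1 *
            G.Δ (lastLoc (ℓ0, rest)) t.1 t.2.1 t.2.2

/-- Cone probability `Pr^{α,β}_{ρ.1}(Cone(ρ))` in `G`, where Player 2 observes
the actual history. -/
noncomputable def conePr (G : PUGame L Ai Ao) (α : Pref L Ai Ao → Ai → ℝ)
    (β : Pref L Ai Ao → Ai → Ao → ℝ) (ρ : Pref L Ai Ao) : ℝ :=
  conePrAux G α β ρ.1 ρ.2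

noncomputable def conePrAAux (G : PUGame L Ai Ao) (α : Pref L Ai Ao → Ai → ℝ)
    (β : Pref L Ai Ao → Pref L Ai Ao → Ai → Ao → ℝ) (ℓ0 : L) : List (Ai × Ao × L) → ℝ
  | [] => 1
  | t :: rest =>
      conePrAAux G α β ℓ0 rest *
        ∑ ρ' ∈ ActMt ((ℓ0, rest) : Pref L Ai Ao),
          ObsSeq G (ℓ0, rest) ρ' * α ρ' t.1 * β (ℓ0, rest) ρ' t.1 t.2.1 *
            G.Δ (lastLoc (ℓ0, rest)) t.1 t.2.1 t.2.2

/-- Cone probability `Pr^{α,β^A}_{ρ.1}(Cone(ρ))` in `G` for an all-powerful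
Player 2 (observing both the actual and the observed history). -/
noncomputable def conePrA (G : PUGame L Ai Ao) (α : Pref L Ai Ao → Ai → ℝ)
    (β : Pref L Ai Ao → Pref L Ai Ao → Ai → Ao → ℝ) (ρ : Pref L Ai Ao) : ℝ :=
  conePrAAux G α β ρ.1 ρ.2

end Core

/-- A randomized Player-1 strategy in `G`. -/
structure Strat1 (L Ai Ao : Type) [Fintype Ai] : Type where
  toFun : Pref L Ai Ao → Ai → ℝ
  nonneg : ∀ ρ σi, 0 ≤ toFun ρ σi
  sum_one : ∀ ρ, ∑ σi, toFun ρ σi = 1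

/-- A randomized Player-2 strategy in `G` (observing the actual history). -/
structure Strat2 (L Ai Ao : Type) [Fintype Ao] : Type where
  toFun : Pref L Ai Ao → Ai → Ao → ℝ
  nonneg : ∀ ρ σi σo, 0 ≤ toFun ρ σi σo
  sum_one : ∀ ρ σi, ∑ σo, toFun ρ σi σo = 1

/-- An all-powerful randomized Player-2 strategy in `G` (observing both the
actual and the observed history). -/
structure StratA (L Ai Ao : Type) [Fintype Ao] : Type where
  toFun : Pref L Ai Ao → Pref L Ai Ao → Ai → Ao → ℝ
  nonneg : ∀ ρ ρ' σi σo, 0 ≤ toFun ρ ρ' σi σo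
  sum_one : ∀ ρ ρ' σi, ∑ σo, toFun ρ ρ' σi σo = 1

/- ### The partial-observation game `H` constructed from `G` -/

/-- A (stutter-suppressed) history of the partial-observation game `H`:
an initial state in `L × L` and a list of steps, in reverse order. -/
abbrev HPref (L Ai Ao : Type) : Type := (L × L) × List (Ai × Ao × (L × L))

def hLast : HPref L Ai Ao → L × L
  | (s0, []) => s0
  | (_, t :: _) => t.2.2

/-- First-component (actual) `G`-prefix of an `H`-history. -/
def g1 (ρH : HPref L Ai Ao) : Pref L Ai Ao :=
  (ρH.1.1, ρH.2.map fun t => (t.1, t.2.1, t.2.2.1))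

/-- Second-component (observed) `G`-prefix of an `H`-history. -/
def g2 (ρH : HPref L Ai Ao) : Pref L Ai Ao :=
  (ρH.1.2, ρH.2.map fun t => (t.1, t.2.1, t.2.2.2))

/-- Pairing of two action-matching `G`-prefixes into an `H`-history. -/
def h12 (ρ1 ρ2 : Pref L Ai Ao) : HPref L Ai Ao :=
  ((ρ1.1, ρ2.1), List.zipWith (fun t u => (t.1, t.2.1, (t.2.2, u.2.2))) ρ1.2 ρ2.2)

/-- A randomized Player-1 strategy in `H`. -/
structure HStrat1 (L Ai Ao : Type) [Fintype Ai] : Type where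
  toFun : HPref L Ai Ao → Ai → ℝ
  nonneg : ∀ ρ σi, 0 ≤ toFun ρ σi
  sum_one : ∀ ρ, ∑ σi, toFun ρ σi = 1

/-- A randomized Player-2 strategy in `H`. -/
structure HStrat2 (L Ai Ao : Type) [Fintype Ao] : Type where
  toFun : HPref L Ai Ao → Ai → Ao → ℝ
  nonneg : ∀ ρ σi σo, 0 ≤ toFun ρ σi σo
  sum_one : ∀ ρ σi, ∑ σo, toFun ρ σi σo = 1

/-- Player-1 observation-based: depends only on the second components and the
actions of the history. -/
def ObsBased1 (α : HPref L Ai Ao → Ai → ℝ) : Prop :=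
  ∀ ρH ρH' : HPref L Ai Ao, g2 ρH = g2 ρH' → α ρH = α ρH'

/-- Player-2 observation-based: depends only on the first components and the
actions of the history. -/
def ObsBased2 (β : HPref L Ai Ao → Ai → Ao → ℝ) : Prop :=
  ∀ ρH ρH' : HPref L Ai Ao, g1 ρH = g1 ρH' → β ρH = β ρH'

section HGame
variable [Fintype L] [Fintype Ai] [Fintype Ao]

/-- The initial distribution `μ` of `H` for the initial location `ℓ0` of `G`. -/
noncomputable def initDist (G : PUGame L Ai Ao) (ℓ0 : L) : L × L → ℝ :=
  fun s => if s.1 = ℓ0 then G.un ℓ0 s.2 else 0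

noncomputable def conePrHAux (G : PUGame L Ai Ao) (μ : L × L → ℝ)
    (α : HPref L Ai Ao → Ai → ℝ) (β : HPref L Ai Ao → Ai → Ao → ℝ)
    (s0 : L × L) : List (Ai × Ao × (L × L)) → ℝ
  | [] => μ s0
  | t :: rest =>
      conePrHAux G μ α β s0 rest * α (s0, rest) t.1 * β (s0, rest) t.1 t.2.1 *
        G.Δ (hLast ((s0, rest) : HPref L Ai Ao)).1 t.1 t.2.1 t.2.2.1 *
        G.un t.2.2.1 t.2.2.2

/-- Cone probability `Pr^{α,β}_μ(Cone(ρH))` in the game `H` constructed from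
`G`, with initial distribution `μ`. -/
noncomputable def conePrH (G : PUGame L Ai Ao) (μ : L × L → ℝ)
    (α : HPref L Ai Ao → Ai → ℝ) (β : HPref L Ai Ao → Ai → Ao → ℝ)
    (ρH : HPref L Ai Ao) : ℝ :=
  conePrHAux G μ α β ρH.1 ρH.2

end HGame

/- ### Mapping of strategies between `G` and `H` -/

/-- `ĝ` on Player-1 strategies. -/
def ghat1 (α : Pref L Ai Ao → Ai → ℝ) : HPref L Ai Ao → Ai → ℝ :=
  fun ρH => α (g2 ρH)

/-- `ĝ` on Player-2 strategies. -/
def ghat2 (β : Pref L Ai Ao → Ai → Ao → ℝ) : HPref L Ai Ao → Ai → Ao → ℝ :=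
  fun ρH => β (g1 ρH)

/-- `ĝ` on all-powerful Player-2 strategies. -/
def ghatA (β : Pref L Ai Ao → Pref L Ai Ao → Ai → Ao → ℝ) :
    HPref L Ai Ao → Ai → Ao → ℝ :=
  fun ρH => β (g1 ρH) (g2 ρH)

/-- `ĥ` on Player-1 strategies (using the canonical history `h12 ρ ρ` with
`g2 (h12 ρ ρ) = ρ`; well defined for observation-based strategies). -/
def hhat1 (α : HPref L Ai Ao → Ai → ℝ) : Pref L Ai Ao → Ai → ℝ :=
  fun ρ => α (h12 ρ ρ)

/-- `ĥ` on Player-2 strategies. -/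
def hhat2 (β : HPref L Ai Ao → Ai → Ao → ℝ) : Pref L Ai Ao → Ai → Ao → ℝ :=
  fun ρ => β (h12 ρ ρ)

/-- `ĥ` on complete-observation Player-2 strategies, giving an all-powerful
strategy in `G`. -/
def hhatA (β : HPref L Ai Ao → Ai → Ao → ℝ) :
    Pref L Ai Ao → Pref L Ai Ao → Ai → Ao → ℝ :=
  fun ρ1 ρ2 => β (h12 ρ1 ρ2)

/- ### Infinite plays, parity objectives, sure winning -/

/-- The sequence of locations of an infinite play of `G` starting at `ℓ0` with
step sequence `s`. -/
def gLoc (ℓ0 : L) (s : ℕ → Ai × Ao × L) : ℕ → L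
  | 0 => ℓ0
  | j + 1 => (s j).2.2

/-- The actual prefix of a play of `G` up to time `j`. -/
def gTake (ℓ0 : L) (s : ℕ → Ai × Ao × L) (j : ℕ) : Pref L Ai Ao :=
  (ℓ0, (List.ofFn fun i : Fin j => s i).reverse)

/-- The observed prefix of a play of `G` up to time `j`, for observed
locations `obsv`. -/
def gObsTake (obsv : ℕ → L) (s : ℕ → Ai × Ao × L) (j : ℕ) : Pref L Ai Ao :=
  (obsv 0, (List.ofFn fun i : Fin j => ((s i).1, (s i).2.1, obsv ((i : ℕ) + 1))).reverse)

/-- The parity objective: the minimum priority occurring infinitely often is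
even. -/
def ParityHolds (p : L → ℕ) (loc : ℕ → L) : Prop :=
  Even (sInf {k | ∃ᶠ i in Filter.atTop, p (loc i) = k})

section Outcome
variable [Fintype L] [Fintype Ai] [Fintype Ao]

/-- Membership of a play in `Outcome(G, ℓ0, α, β)` for a Player-2 strategy
observing the actual history. -/
def InOutcome (G : PUGame L Ai Ao) (ℓ0 : L) (α : Pref L Ai Ao → Ai → ℝ)
    (β : Pref L Ai Ao → Ai → Ao → ℝ) (s : ℕ → Ai × Ao × L) : Prop :=
  ∃ obsv : ℕ → L,
    (∀ j, 0 < G.un (gLoc ℓ0 s j) (obsv j)) ∧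
    (∀ j, 0 < α (gObsTake obsv s j) (s j).1) ∧
    (∀ j, 0 < β (gTake ℓ0 s j) (s j).1 (s j).2.1) ∧
    (∀ j, 0 < G.Δ (gLoc ℓ0 s j) (s j).1 (s j).2.1 (gLoc ℓ0 s (j + 1)))

/-- Membership of a play in `Outcome(G, ℓ0, α, β^A)` for an all-powerful
Player-2 strategy. -/
def InOutcomeA (G : PUGame L Ai Ao) (ℓ0 : L) (α : Pref L Ai Ao → Ai → ℝ)
    (β : Pref L Ai Ao → Pref L Ai Ao → Ai → Ao → ℝ) (s : ℕ → Ai × Ao × L) : Prop :=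
  ∃ obsv : ℕ → L,
    (∀ j, 0 < G.un (gLoc ℓ0 s j) (obsv j)) ∧
    (∀ j, 0 < α (gObsTake obsv s j) (s j).1) ∧
    (∀ j, 0 < β (gTake ℓ0 s j) (gObsTake obsv s j) (s j).1 (s j).2.1) ∧
    (∀ j, 0 < G.Δ (gLoc ℓ0 s j) (s j).1 (s j).2.1 (gLoc ℓ0 s (j + 1)))

end Outcome

/-- An infinite play of `H`: at each time `j`, the state `(x j).1 : L × L` and
the pair of actions `(x j).2` chosen at that state. -/
abbrev HPlay (L Ai Ao : Type) : Type := ℕ → (L × L) × Ai × Ao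

/-- The `j`-th step of an `H`-play. -/
def hPlayStep (x : HPlay L Ai Ao) (j : ℕ) : Ai × Ao × (L × L) :=
  ((x j).2.1, (x j).2.2, (x (j + 1)).1)

/-- The history of an `H`-play up to time `j`. -/
def hTakePlay (x : HPlay L Ai Ao) (j : ℕ) : HPref L Ai Ao :=
  ((x 0).1, (List.ofFn fun i : Fin j => hPlayStep x i).reverse)

section HOutcome
variable [Fintype L] [Fintype Ai] [Fintype Ao]

/-- An `H`-play is consistent with the strategies `α, β` from initial state
`s0` (all choices and transitions have positive probability). -/
def HConsistent (G : PUGame L Ai Ao) (s0 : L × L)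
    (α : HPref L Ai Ao → Ai → ℝ) (β : HPref L Ai Ao → Ai → Ao → ℝ)
    (x : HPlay L Ai Ao) : Prop :=
  (x 0).1 = s0 ∧
  (∀ j, 0 < α (hTakePlay x j) (x j).2.1) ∧
  (∀ j, 0 < β (hTakePlay x j) (x j).2.1 (x j).2.2) ∧
  (∀ j, 0 < G.Δ (x j).1.1 (x j).2.1 (x j).2.2 (x (j + 1)).1.1 *
          G.un (x (j + 1)).1.1 (x (j + 1)).1.2)

end HOutcome

/- ### Measures on infinite plays -/

/-- The discrete product σ-algebra on infinite plays. -/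
instance playMS (St : Type) : MeasurableSpace (ℕ → St) :=
  @MeasurableSpace.pi ℕ (fun _ => St) (fun _ => ⊤)

/-- The cylinder (cone) of a finite list of steps (in reverse chronological
order): plays whose first steps are exactly the given ones. -/
def listCylinder {St : Type} (l : List St) : Set (ℕ → St) :=
  {s | (List.ofFn fun i : Fin l.length => s i) = l.reverse}

/-- The cylinder (cone) of an `H`-history. -/
def hCylinder (ρH : HPref L Ai Ao) : Set (HPlay L Ai Ao) :=
  {x | (x 0).1 = ρH.1 ∧ (List.ofFn fun i : Fin ρH.2.length => hPlayStep x i) = ρH.2.reverse}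

/-- The map sending an `H`-play to the `G`-play of first components with the
same actions. -/
def proj1Play (x : HPlay L Ai Ao) : ℕ → Ai × Ao × L :=
  fun j => ((x j).2.1, (x j).2.2, (x (j + 1)).1.1)

section MeasCones
variable [Fintype L] [Fintype Ai] [Fintype Ao]

/-- `ν` extends the cone probabilities `Pr^{α,β}_{ℓ0}` of `G`. -/
def GCones (G : PUGame L Ai Ao) (ℓ0 : L) (α : Pref L Ai Ao → Ai → ℝ)
    (β : Pref L Ai Ao → Ai → Ao → ℝ) (ν : Measure (ℕ → Ai × Ao × L)) : Prop :=
  ∀ l : List (Ai × Ao × L),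
    ν (listCylinder l) = ENNReal.ofReal (conePr G α β (ℓ0, l))

/-- `ν` extends the cone probabilities `Pr^{α,β^A}_{ℓ0}` of `G` (all-powerful
Player 2). -/
def GConesA (G : PUGame L Ai Ao) (ℓ0 : L) (α : Pref L Ai Ao → Ai → ℝ)
    (β : Pref L Ai Ao → Pref L Ai Ao → Ai → Ao → ℝ)
    (ν : Measure (ℕ → Ai × Ao × L)) : Prop :=
  ∀ l : List (Ai × Ao × L),
    ν (listCylinder l) = ENNReal.ofReal (conePrA G α β (ℓ0, l))

/-- `ν` extends the cone probabilities `Pr^{α,β}_μ` of `H`. -/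
def HCones (G : PUGame L Ai Ao) (μ : L × L → ℝ) (α : HPref L Ai Ao → Ai → ℝ)
    (β : HPref L Ai Ao → Ai → Ao → ℝ) (ν : Measure (HPlay L Ai Ao)) : Prop :=
  ∀ ρH : HPref L Ai Ao,
    ν (hCylinder ρH) = ENNReal.ofReal (conePrH G μ α β ρH)

end MeasCones

theorem aux_g2_take (x : HPlay L Ai Ao) (j : ℕ) :
    g2 (hTakePlay x j) = gObsTake (fun j => (x j).1.2) (proj1Play x) j := by
  simp only [g2, hTakePlay, gObsTake, List.map_reverse, List.map_ofFn]
  rfl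

theorem aux_g1_take (x : HPlay L Ai Ao) (j : ℕ) :
    g1 (hTakePlay x j) = gTake (x 0).1.1 (proj1Play x) j := by
  simp only [g1, hTakePlay, gTake, List.map_reverse, List.map_ofFn]
  rfl

theorem aux_g1_h12 (ρ : Pref L Ai Ao) : g1 (h12 ρ ρ) = ρ := by
  obtain ⟨a, l⟩ := ρ
  simp [g1, h12, List.zipWith_self]
  exact List.map_id l

theorem aux_g2_h12 (ρ : Pref L Ai Ao) : g2 (h12 ρ ρ) = ρ := by
  obtain ⟨a, l⟩ := ρ
  simp [g2, h12, List.zipWith_self]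
  exact List.map_id l

theorem aux_loc (x : HPlay L Ai Ao) (j : ℕ) :
    gLoc (x 0).1.1 (proj1Play x) j = (x j).1.1 := by
  cases j <;> rfl

/-- Player 1 has a sure winning strategy from `ℓ0` in `G` for
`Parity(p_G)` against all (not all-powerful) Player-2 strategies iff Player 1
has an observation-based strategy in `H` that is sure winning for
`Parity(p_H)` from every state `(ℓ0, ℓ)` with `un(ℓ0)(ℓ) > 0` against all
observation-based Player-2 strategies. -/
theorem sure_winning_equiv {L Ai Ao : Type}
    [Fintype L] [Fintype Ai] [Fintype Ao]
    (G : PUGame L Ai Ao) (pG : L → ℕ) (d : ℕ) (hd : ∀ ℓ, pG ℓ ≤ d) (ℓ0 : L) :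
    (∃ α : Strat1 L Ai Ao, ∀ β : Strat2 L Ai Ao, ∀ s : ℕ → Ai × Ao × L,
        InOutcome G ℓ0 α.toFun β.toFun s → ParityHolds pG (gLoc ℓ0 s)) ↔
    (∃ αH : HStrat1 L Ai Ao, ObsBased1 αH.toFun ∧
        ∀ ℓ : L, 0 < G.un ℓ0 ℓ →
          ∀ βH : HStrat2 L Ai Ao, ObsBased2 βH.toFun → ∀ x : HPlay L Ai Ao,
            HConsistent G (ℓ0, ℓ) αH.toFun βH.toFun x →
            ParityHolds pG fun i => (x i).1.1) := by
  constructor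
  · rintro ⟨α, hα⟩
    refine ⟨⟨ghat1 α.toFun, fun ρ σ => α.nonneg _ _, fun ρ => α.sum_one _⟩, ?_, ?_⟩
    · intro ρ ρ' h
      simp only [ghat1, h]
    · rintro ℓ hℓ βH hβ x ⟨h0, h1, h2, h3⟩
      have e0 : (x 0).1.1 = ℓ0 := by rw [h0]
      have hloc : gLoc ℓ0 (proj1Play x) = fun i => (x i).1.1 := by
        funext j; rw [← e0]; exact aux_loc x j
      have key := hα ⟨hhat2 βH.toFun, fun ρ a b => βH.nonneg _ _ _, fun ρ a => βH.sum_one _ _⟩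
        (proj1Play x) ?_
      · rwa [hloc] at key
      · refine ⟨fun j => (x j).1.2, ?_, ?_, ?_, ?_⟩
        · intro j
          rw [hloc]
          cases j with
          | zero => simpa [h0] using hℓ
          | succ j => exact pos_of_mul_pos_right (h3 j) (G.Δ_nonneg _ _ _ _)
        · intro j
          rw [← aux_g2_take]
          exact h1 j
        · intro j
          have := hβ (hTakePlay x j) (h12 (gTake ℓ0 (proj1Play x) j) (gTake ℓ0 (proj1Play x) j))
            (by rw [aux_g1_h12, aux_g1_take, e0])
          have h := h2 j
          rw [this] at h
          exact h
        · intro j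
          rw [hloc]
          exact pos_of_mul_pos_left (h3 j) (G.un_nonneg _ _)
  · rintro ⟨αH, hO, hα⟩
    refine ⟨⟨hhat1 αH.toFun, fun ρ σ => αH.nonneg _ _, fun ρ => αH.sum_one _⟩, ?_⟩
    rintro β s ⟨obsv, h0, h1, h2, h3⟩
    let x : HPlay L Ai Ao := fun j => ((gLoc ℓ0 s j, obsv j), (s j).1, (s j).2.1)
    have hs : proj1Play x = s := rfl
    refine hα (obsv 0) (h0 0)
      ⟨ghat2 β.toFun, fun ρ a b => β.nonneg _ _ _, fun ρ a => β.sum_one _ _⟩ ?_ x ⟨rfl, ?_, ?_, ?_⟩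
    · intro ρ ρ' h
      simp only [ghat2, h]
    · intro j
      have := hO (hTakePlay x j) (h12 (gObsTake obsv s j) (gObsTake obsv s j))
        (by rw [aux_g2_h12, aux_g2_take, hs])
      rw [this]
      exact h1 j
    · intro j
      have := h2 j
      show 0 < β.toFun (g1 (hTakePlay x j)) _ _
      rw [aux_g1_take]
      exact this
    · intro j
      exact mul_pos (h3 j) (h0 (j + 1))
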